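/- arXiv:2401.07153 — 5 statements merged into one kernel-verified Lean document; each statement's English description precedes it below -/
import Mathlib

section
/- There exist a transmit position set D_tx = {0,1,2} and two receive position sets D_rx^I = {0,1,2,5} and D_rx^II = {0,1,3,5} (subsets of the natural numbers) whose sumsets satisfy D_tx + D_rx^I = D_tx + D_rx^II = {0,1,2,3,4,5,6,7}, such that with the associated redundancy patterns Υ_I and Υ_II the following holds for every V ≥ 8 and every 8×V complex Vandermonde matrix A with A[ℓ,i] = z_i^(ℓ-1) built from pairwise distinct complex numbers z_1,…,z_V: (i) for every matrix S ∈ ℂ^{2×3}, there exists a set of 8 columns of B_I = (S ⊗ I_4) Υ_I A that is linearly dependent (so the Kruskal rank of B_I is strictly less than 8); (ii) there exists a matrix S ∈ ℂ^{2×3} of rank 2 such that every set of 8 columns of B_II = (S ⊗ I_4) Υ_II A is linearly independent (so the Kruskal rank of B_II equals 8). -/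
open Matrix Kronecker Pointwise

/-- Transmit positions of both arrays: {0,1,2}. -/
def dtx : Fin 3 → ℕ := ![0, 1, 2]

/-- Receive positions of Array I: {0,1,2,5}. -/
def drxI : Fin 4 → ℕ := ![0, 1, 2, 5]

/-- Receive positions of Array II: {0,1,3,5}. -/
def drxII : Fin 4 → ℕ := ![0, 1, 3, 5]

/-- Redundancy pattern of Array I: row (n, m), column ℓ is 1 iff dtx n + drxI m = ℓ. -/
noncomputable def UpsilonI : Matrix (Fin 3 × Fin 4) (Fin 8) ℂ :=
  fun p ℓ => if dtx p.1 + drxI p.2 = (ℓ : ℕ) then 1 else 0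

/-- Redundancy pattern of Array II: row (n, m), column ℓ is 1 iff dtx n + drxII m = ℓ. -/
noncomputable def UpsilonII : Matrix (Fin 3 × Fin 4) (Fin 8) ℂ :=
  fun p ℓ => if dtx p.1 + drxII p.2 = (ℓ : ℕ) then 1 else 0

/-!
Let `p₀, p₁` be the polynomials `∑ₙ S a n * X ^ dtx n` of the two rows of `S`. Row `(a, m)` of
`(S ⊗ₖ 1) * Υ` lists the coefficients of `pₐ * X ^ drx m`. If every transmit position is also a
receive position, both `pₐ` lie in the span of the `X ^ drx m`, so `p₁ * p₀ - p₀ * p₁ = 0` is a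
relation between the rows, and no choice of `S` gives rank `8`. This is the case for Array I.
In Array II the position `2` is missing, and `p₀ = 1 + X ^ 2`, `p₁ = X` give a compressed pattern
with trivial kernel, which therefore preserves the independence of Vandermonde columns.
-/

section LinearAlgebra

variable {R ι m n : Type*} [CommRing R]

theorem linearIndependent_row_of_linearIndependent_col_mul [Fintype m] [Fintype n] [Fintype ι]
    (hcard : Fintype.card m = Fintype.card ι) {M : Matrix m n R} {A : Matrix n ι R}
    (h : LinearIndependent R (M * A).col) : LinearIndependent R M.row := by
  classical
  let e : m ≃ ι := Fintype.equivOfCardEq hcard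
  let A' : Matrix n m R := A.submatrix id e
  have hcol : LinearIndependent R (M * A').col := h.comp e e.injective
  have hrow : LinearIndependent R (M * A').row :=
    (Nonsingular.of_linearIndependent_col hcol).linearIndependent_row
  exact LinearIndependent.of_comp A'.vecMulLinear hrow

theorem linearIndependent_col_mul_of_mulVec_injective [Fintype n] {M : Matrix m n R}
    (hM : Function.Injective M.mulVec) {A : Matrix n ι R} (hA : LinearIndependent R A.col) :
    LinearIndependent R (M * A).col :=
  hA.map' M.mulVecLin (LinearMap.ker_eq_bot.mpr hM)

theorem linearIndependent_pow_of_injective [IsDomain R] [Fintype ι] {N : ℕ}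
    (hcard : Fintype.card ι ≤ N) {z : ι → R} (hz : Function.Injective z) :
    LinearIndependent R (fun i (ℓ : Fin N) => z i ^ (ℓ : ℕ)) := by
  let e := (Fintype.equivFin ι).symm
  have hdet : (vandermonde (z ∘ e)).det ≠ 0 :=
    det_vandermonde_ne_zero_iff.mpr (hz.comp e.injective)
  rw [← linearIndependent_equiv e]
  exact LinearIndependent.of_comp (LinearMap.funLeft R R (Fin.castLE hcard))
    (linearIndependent_rows_of_det_ne_zero hdet)

theorem rank_eq_card_of_mul_eq_one [Nontrivial R] [Fintype m] [DecidableEq m] [Fintype n]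
    {M : Matrix m n R} {N : Matrix n m R} (h : M * N = 1) : M.rank = Fintype.card m := by
  refine M.rank_le_card_height.antisymm ?_
  calc Fintype.card m = (M * N).rank := by rw [h, rank_one]
    _ ≤ M.rank := rank_mul_le_left M N

end LinearAlgebra

/-- The redundancy pattern `Υ` of the arrays `dtx` and `drx`, with the sum co-array taken to be
`{0, …, N - 1}`; a sum `dtx n + drx m ≥ N` gives a zero row. -/
def redundancyPattern (R : Type*) [Zero R] [One R] {α β : Type*} (dtx : α → ℕ) (drx : β → ℕ)
    (N : ℕ) : Matrix (α × β) (Fin N) R :=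
  fun p ℓ => if dtx p.1 + drx p.2 = (ℓ : ℕ) then 1 else 0

theorem redundancyPattern_mulVec_apply {R α β : Type*} [NonAssocSemiring R] {dtx : α → ℕ}
    {drx : β → ℕ} {N : ℕ} (v : Fin N → R) (i : α) (j : β) (h : dtx i + drx j < N) :
    (redundancyPattern R dtx drx N *ᵥ v) (i, j) = v ⟨dtx i + drx j, h⟩ := by
  have hiff (ℓ : Fin N) : dtx i + drx j = ℓ ↔ ⟨dtx i + drx j, h⟩ = ℓ := by simp [Fin.ext_iff]
  simp [mulVec, dotProduct, redundancyPattern, hiff]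

section CompressedPattern

open Polynomial

variable {R α β κ : Type*} [Fintype α]

/-- The response `∑ i, c i * X ^ d i` of an array with element positions `d` and weights `c`;
evaluated at a Vandermonde node it is the weighted output of the array. -/
noncomputable def arrayPolynomial [Semiring R] (c : α → R) (d : α → ℕ) : R[X] :=
  ∑ i, C (c i) * X ^ d i

theorem arrayPolynomial_neg [Ring R] (c : α → R) (d : α → ℕ) :
    arrayPolynomial (-c) d = -arrayPolynomial c d := by
  simp [arrayPolynomial]

theorem arrayPolynomial_extend [Semiring R] [Fintype β] {e : α → β} (he : Function.Injective e)
    (c : α → R) (d : β → ℕ) :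
    arrayPolynomial (Function.extend e c 0) d = arrayPolynomial c (d ∘ e) := by
  refine (Fintype.sum_of_injective e he _ _ (fun j hj => ?_) fun i => ?_).symm
  · simp [Function.extend_apply' c (0 : β → R) j hj]
  · simp [he.extend_apply]

section

variable [Fintype β] [DecidableEq β]

theorem kronecker_one_mulVec_apply [Semiring R] (S : Matrix κ α R) (x : α × β → R) (a : κ) (j : β) :
    ((S ⊗ₖ (1 : Matrix β β R)) *ᵥ x) (a, j) = ∑ i, S a i * x (i, j) := by
  simp [mulVec, dotProduct, Fintype.sum_prod_type, one_apply]

theorem compressed_redundancyPattern_mulVec_apply [Semiring R] (S : Matrix κ α R) {dtx : α → ℕ}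
    {drx : β → ℕ} {N : ℕ} (h : ∀ i j, dtx i + drx j < N) (v : Fin N → R) (a : κ) (j : β) :
    (((S ⊗ₖ (1 : Matrix β β R)) * redundancyPattern R dtx drx N) *ᵥ v) (a, j) =
      ∑ i, S a i * v ⟨dtx i + drx j, h i j⟩ := by
  simp only [← mulVec_mulVec, kronecker_one_mulVec_apply, redundancyPattern_mulVec_apply, h]

theorem compressed_redundancyPattern_apply [CommSemiring R] (S : Matrix κ α R) (dtx : α → ℕ)
    (drx : β → ℕ) (N : ℕ) (a : κ) (j : β) (ℓ : Fin N) :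
    ((S ⊗ₖ (1 : Matrix β β R)) * redundancyPattern R dtx drx N) (a, j) ℓ =
      (X ^ drx j * arrayPolynomial (S a) dtx).coeff ℓ := by
  have hshift (i : α) : X ^ drx j * (C (S a i) * X ^ dtx i) = C (S a i) * X ^ (dtx i + drx j) := by
    ring
  calc _ = ∑ i, S a i * redundancyPattern R dtx drx N (i, j) ℓ :=
        kronecker_one_mulVec_apply S ((redundancyPattern R dtx drx N).col ℓ) a j
    _ = _ := by
        simp only [arrayPolynomial, Finset.mul_sum, hshift, finsetSum_coeff, coeff_C_mul,
          coeff_X_pow, redundancyPattern, eq_comm]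

theorem vecMul_compressed_redundancyPattern_apply [CommSemiring R] [Fintype κ] (S : Matrix κ α R)
    (dtx : α → ℕ) (drx : β → ℕ) (N : ℕ) (w : κ × β → R) (ℓ : Fin N) :
    (w ᵥ* ((S ⊗ₖ (1 : Matrix β β R)) * redundancyPattern R dtx drx N)) ℓ =
      (∑ a, arrayPolynomial (fun j => w (a, j)) drx * arrayPolynomial (S a) dtx).coeff ℓ := by
  have hcoeff (a : κ) :
      (arrayPolynomial (fun j => w (a, j)) drx * arrayPolynomial (S a) dtx).coeff ℓ =
        ∑ j, w (a, j) * (X ^ drx j * arrayPolynomial (S a) dtx).coeff ℓ := by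
    rw [arrayPolynomial, Finset.sum_mul, finsetSum_coeff]
    simp only [mul_assoc, coeff_C_mul]
  simp only [vecMul, dotProduct, Fintype.sum_prod_type, compressed_redundancyPattern_apply,
    finsetSum_coeff, hcoeff]

theorem not_linearIndependent_row_compressed_redundancyPattern [CommRing R] [Nontrivial R]
    [Nonempty β] {dtx : α → ℕ} {drx : β → ℕ} (hinj : Function.Injective dtx)
    (hsub : Set.range dtx ⊆ Set.range drx) (S : Matrix (Fin 2) α R) (N : ℕ) :
    ¬ LinearIndependent R ((S ⊗ₖ (1 : Matrix β β R)) * redundancyPattern R dtx drx N).row := by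
  intro hrow
  have hS : S ≠ 0 := by
    rintro rfl
    exact hrow.ne_zero (0, Classical.arbitrary β) (by ext; simp)
  choose e he using fun i => hsub ⟨i, rfl⟩
  obtain rfl : drx ∘ e = dtx := funext he
  have e_inj : Function.Injective e := hinj.of_comp
  let w : Fin 2 × β → R := fun p =>
    ![Function.extend e (S 1) 0, -Function.extend e (S 0) 0] p.1 p.2
  have h₀ : arrayPolynomial (fun j => w (0, j)) drx = arrayPolynomial (S 1) (drx ∘ e) :=
    arrayPolynomial_extend e_inj _ _
  have h₁ : arrayPolynomial (fun j => w (1, j)) drx = -arrayPolynomial (S 0) (drx ∘ e) :=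
    (arrayPolynomial_neg _ _).trans (congrArg Neg.neg (arrayPolynomial_extend e_inj _ _))
  have hw : w ᵥ* ((S ⊗ₖ (1 : Matrix β β R)) * redundancyPattern R (drx ∘ e) drx N) = 0 := by
    ext ℓ
    rw [vecMul_compressed_redundancyPattern_apply, Fin.sum_univ_two, h₀, h₁, neg_mul, mul_comm,
      add_neg_cancel, coeff_zero, Pi.zero_apply]
  have w_eq_zero : w = 0 := vecMul_injective_iff.mpr hrow (hw.trans (zero_vecMul _).symm)
  have hS₁ (i : α) : S 1 i = 0 := by
    simpa [w, e_inj.extend_apply] using congrFun w_eq_zero (0, e i)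
  have hS₀ (i : α) : S 0 i = 0 := by
    simpa [w, e_inj.extend_apply] using congrFun w_eq_zero (1, e i)
  exact hS (Matrix.ext (Fin.forall_fin_two.mpr ⟨hS₀, hS₁⟩))

end

end CompressedPattern

/-- The compression matrix of Array II; its rows have array polynomials `1 + X ^ 2` and `X`. -/
def evenOddCompression (R : Type*) [Zero R] [One R] : Matrix (Fin 2) (Fin 3) R :=
  !![1, 0, 1; 0, 1, 0]

theorem rank_evenOddCompression (R : Type*) [CommRing R] [Nontrivial R] :
    (evenOddCompression R).rank = 2 := by
  have hinv : evenOddCompression R * (!![1, 0; 0, 1; 0, 0] : Matrix (Fin 3) (Fin 2) R) = 1 := by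
    ext a b
    fin_cases a <;> fin_cases b <;> simp [evenOddCompression]
  exact rank_eq_card_of_mul_eq_one hinv

theorem mulVec_injective_evenOddCompression_arrayII (R : Type*) [CommRing R] :
    Function.Injective ((evenOddCompression R ⊗ₖ (1 : Matrix (Fin 4) (Fin 4) R)) *
      redundancyPattern R dtx drxII 8).mulVec := by
  rw [← coe_mulVecLin, injective_iff_map_eq_zero]
  intro v hv
  have hlt : ∀ i j, dtx i + drxII j < 8 := by decide
  have hrow (a : Fin 2) (j : Fin 4) :
      ∑ i, evenOddCompression R a i * v ⟨dtx i + drxII j, hlt i j⟩ = 0 :=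
    (compressed_redundancyPattern_mulVec_apply _ hlt v a j).symm.trans (congrFun hv (a, j))
  have add_shift_two_eq_zero (j : Fin 4) :
      v ⟨dtx 0 + drxII j, hlt 0 j⟩ + v ⟨dtx 2 + drxII j, hlt 2 j⟩ = 0 := by
    simpa [evenOddCompression, Fin.sum_univ_three] using hrow 0 j
  have shift_one_eq_zero (j : Fin 4) : v ⟨dtx 1 + drxII j, hlt 1 j⟩ = 0 := by
    simpa [evenOddCompression, Fin.sum_univ_three] using hrow 1 j
  have h1 : v 1 = 0 := shift_one_eq_zero 0
  have h2 : v 2 = 0 := shift_one_eq_zero 1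
  have h4 : v 4 = 0 := shift_one_eq_zero 2
  have h6 : v 6 = 0 := shift_one_eq_zero 3
  have h0 : v 0 = 0 :=
    (add_eq_zero_iff_eq_neg.mp (add_shift_two_eq_zero 0)).trans (neg_eq_zero.mpr h2)
  have h3 : v 3 = 0 :=
    (neg_eq_of_add_eq_zero_right (add_shift_two_eq_zero 1)).symm.trans (neg_eq_zero.mpr h1)
  have h5 : v 5 = 0 :=
    (neg_eq_of_add_eq_zero_right (add_shift_two_eq_zero 2)).symm.trans (neg_eq_zero.mpr h3)
  have h7 : v 7 = 0 :=
    (neg_eq_of_add_eq_zero_right (add_shift_two_eq_zero 3)).symm.trans (neg_eq_zero.mpr h5)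
  ext ℓ
  fin_cases ℓ <;> assumption

theorem stmt0_general (R : Type*) [CommRing R] [IsDomain R] :
    (({0, 1, 2} : Finset ℕ) + ({0, 1, 2, 5} : Finset ℕ) = Finset.range 8) ∧
    (({0, 1, 2} : Finset ℕ) + ({0, 1, 3, 5} : Finset ℕ) = Finset.range 8) ∧
    (∀ (S : Matrix (Fin 2) (Fin 3) R) {ι : Type*} (A : Matrix (Fin 8) ι R) (s : Finset ι),
      s.card = 8 → ¬ LinearIndependent R (fun i : s =>
        ((S ⊗ₖ (1 : Matrix (Fin 4) (Fin 4) R)) * redundancyPattern R dtx drxI 8 * A)ᵀ i)) ∧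
    (∃ S : Matrix (Fin 2) (Fin 3) R, S.rank = 2 ∧
      ∀ {ι : Type*} (z : ι → R), Function.Injective z →
        ∀ A : Matrix (Fin 8) ι R, (∀ ℓ i, A ℓ i = z i ^ (ℓ : ℕ)) →
          ∀ s : Finset ι, s.card = 8 → LinearIndependent R (fun i : s =>
            ((S ⊗ₖ (1 : Matrix (Fin 4) (Fin 4) R)) * redundancyPattern R dtx drxII 8 * A)ᵀ i)) := by
  refine ⟨by decide, by decide, fun S ι A s hs hcol => ?_, evenOddCompression R,
    rank_evenOddCompression R, fun {ι} z hz A hA s hs => ?_⟩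
  · have hsub : Set.range dtx ⊆ Set.range drxI := by
      rintro _ ⟨i, rfl⟩
      exact ⟨i.castSucc, by decide +revert⟩
    refine not_linearIndependent_row_compressed_redundancyPattern (by decide) hsub S 8 ?_
    exact linearIndependent_row_of_linearIndependent_col_mul
      (A := A.submatrix id ((↑) : s → ι)) (by simp [hs]) hcol
  · have hA' : LinearIndependent R (A.submatrix id ((↑) : s → ι)).col := by
      have hcols : (A.submatrix id ((↑) : s → ι)).col =
          fun (i : s) (ℓ : Fin 8) => z i ^ (ℓ : ℕ) := by
        ext i ℓ
        exact hA ℓ i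
      rw [hcols]
      exact linearIndependent_pow_of_injective (by simp [hs]) (hz.comp Subtype.val_injective)
    exact linearIndependent_col_mul_of_mulVec_injective
      (mulVec_injective_evenOddCompression_arrayII R) hA'

theorem stmt0 :
    -- the sum co-arrays of both arrays coincide and equal {0,1,…,7}
    (({0, 1, 2} : Finset ℕ) + ({0, 1, 2, 5} : Finset ℕ) = Finset.range 8) ∧
    (({0, 1, 2} : Finset ℕ) + ({0, 1, 3, 5} : Finset ℕ) = Finset.range 8) ∧
    ∀ (V : ℕ), 8 ≤ V → ∀ (z : Fin V → ℂ), Function.Injective z →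
      ∀ (A : Matrix (Fin 8) (Fin V) ℂ), (∀ (ℓ : Fin 8) (i : Fin V), A ℓ i = z i ^ (ℓ : ℕ)) →
        -- (i) for every S, some 8 columns of B_I are linearly dependent
        ((∀ S : Matrix (Fin 2) (Fin 3) ℂ,
            ∃ s : Finset (Fin V), s.card = 8 ∧
              ¬ LinearIndependent ℂ
                (fun i : s => ((S ⊗ₖ (1 : Matrix (Fin 4) (Fin 4) ℂ)) * UpsilonI * A)ᵀ (i : Fin V))) ∧
        -- (ii) there is a rank-2 S such that every 8 columns of B_II are linearly independent
         (∃ S : Matrix (Fin 2) (Fin 3) ℂ, S.rank = 2 ∧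
            ∀ s : Finset (Fin V), s.card = 8 →
              LinearIndependent ℂ
                (fun i : s => ((S ⊗ₖ (1 : Matrix (Fin 4) (Fin 4) ℂ)) * UpsilonII * A)ᵀ (i : Fin V)))) := by
  obtain ⟨hI, hII, hdep, S, hS, hindep⟩ := stmt0_general ℂ
  refine ⟨hI, hII, fun V hV z hz A hA => ⟨fun T => ?_, S, hS, hindep z hz A hA⟩⟩
  obtain ⟨s, -, hs⟩ := Finset.exists_subset_card_eq (hV.trans_eq (Finset.card_fin V).symm)
  exact ⟨s, hs, hdep T A s hs⟩
end

section
/- Let S ∈ ℂ^{T×N_tx}, let Υ ∈ ℂ^{N_tx N_rx × N_Σ} be a 0/1 matrix in which every row has exactly one entry equal to 1 and every column has at least one entry equal to 1, let A ∈ ℂ^{N_Σ×V} with V ≥ N_Σ, and set B = (S ⊗ I_{N_rx}) Υ A. Assume N_rx · rank(S) ≥ N_Σ. Then every set of N_Σ columns of B is linearly independent if and only if every set of N_Σ columns of A is linearly independent and rank((S ⊗ I_{N_rx}) Υ) = N_Σ. -/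
open Matrix Kronecker

/-! An independent set of `card n` columns of `W * A` forces `rank W = card n`, because
`rank (W * A) ≤ rank W`; conversely, a matrix `W` with `card n` columns and rank `card n` acts
injectively, so it preserves the independence of any set of columns of `A`. -/

section FullColumnRank

variable {R m n ι : Type*} [CommSemiring R] [OrzechProperty R] [Nontrivial R] [Fintype n]

theorem linearIndependent_col_iff_rank_eq_card (W : Matrix m n R) :
    LinearIndependent R W.col ↔ W.rank = Fintype.card n := by
  rw [linearIndependent_iff_card_eq_finrank_span, Set.finrank, ← W.rank_eq_finrank_span_cols,
    eq_comm]

theorem linearIndependent_col_mul_iff [Fintype ι] (W : Matrix m n R) (A : Matrix n ι R)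
    (hcard : Fintype.card ι = Fintype.card n) :
    LinearIndependent R (W * A).col ↔ LinearIndependent R A.col ∧ W.rank = Fintype.card n := by
  constructor
  · intro hWA
    have hrank : (W * A).rank = Fintype.card n :=
      ((linearIndependent_col_iff_rank_eq_card _).mp hWA).trans hcard
    exact ⟨LinearIndependent.of_comp W.mulVecLin hWA,
      W.rank_le_card_width.antisymm (hrank ▸ W.rank_mul_le_left A)⟩
  · rintro ⟨hA, hW⟩
    have hinj : Function.Injective W.mulVecLin :=
      mulVec_injective_iff.mpr ((linearIndependent_col_iff_rank_eq_card W).mpr hW)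
    exact hA.map_injOn W.mulVecLin hinj.injOn

theorem stmt1_general {p : Type*} (W : Matrix m n R) (A : Matrix n p R)
    (hp : Fintype.card n ≤ Cardinal.mk p) :
    (∀ s : Finset p, s.card = Fintype.card n →
        LinearIndependent R (fun j : s => (W * A)ᵀ j)) ↔
      ((∀ s : Finset p, s.card = Fintype.card n →
          LinearIndependent R (fun j : s => Aᵀ j)) ∧
        W.rank = Fintype.card n) := by
  have hcols (s : Finset p) (hs : s.card = Fintype.card n) :
      LinearIndependent R (fun j : s => (W * A)ᵀ j) ↔
        LinearIndependent R (fun j : s => Aᵀ j) ∧ W.rank = Fintype.card n :=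
    linearIndependent_col_mul_iff W (A.submatrix id ((↑) : s → p)) (by simpa using hs)
  obtain ⟨s₀, hs₀⟩ := Cardinal.exists_finset_eq_card hp
  constructor
  · intro hWA
    exact ⟨fun s hs => ((hcols s hs).mp (hWA s hs)).1,
      ((hcols s₀ hs₀.symm).mp (hWA s₀ hs₀.symm)).2⟩
  · rintro ⟨hA, hW⟩ s hs
    exact (hcols s hs).mpr ⟨hA s hs, hW⟩

end FullColumnRank

theorem stmt1 (T Ntx Nrx Nsum V : ℕ)
    (S : Matrix (Fin T) (Fin Ntx) ℂ)
    (Υ : Matrix (Fin Ntx × Fin Nrx) (Fin Nsum) ℂ)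
    (hΥ01 : ∀ r ℓ, Υ r ℓ = 0 ∨ Υ r ℓ = 1)
    (hrow : ∀ r, ∃! ℓ, Υ r ℓ = 1)
    (hcol : ∀ ℓ, ∃ r, Υ r ℓ = 1)
    (A : Matrix (Fin Nsum) (Fin V) ℂ)
    (hV : Nsum ≤ V)
    (hwr : Nsum ≤ Nrx * S.rank)
    (B : Matrix (Fin T × Fin Nrx) (Fin V) ℂ)
    (hB : B = (S ⊗ₖ (1 : Matrix (Fin Nrx) (Fin Nrx) ℂ)) * Υ * A) :
    (∀ s : Finset (Fin V), s.card = Nsum →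
        LinearIndependent ℂ (fun i : s => Bᵀ (i : Fin V))) ↔
      ((∀ s : Finset (Fin V), s.card = Nsum →
          LinearIndependent ℂ (fun i : s => Aᵀ (i : Fin V))) ∧
        ((S ⊗ₖ (1 : Matrix (Fin Nrx) (Fin Nrx) ℂ)) * Υ).rank = Nsum) := by
  subst hB
  simpa only [Fintype.card_fin] using
    stmt1_general ((S ⊗ₖ (1 : Matrix (Fin Nrx) (Fin Nrx) ℂ)) * Υ) A (by simpa using hV)
end

section
/- Let Υ_I be the 12×8 0/1 matrix defined by Υ_I[(n−1)·4+m, ℓ] = 1 if d_tx[n] + d_rx[m] = ℓ−1 and 0 otherwise, where (d_tx[1],d_tx[2],d_tx[3]) = (0,1,2) and (d_rx[1],d_rx[2],d_rx[3],d_rx[4]) = (0,1,2,5). Then for every matrix S ∈ ℂ^{2×3}, the last three columns (columns 6, 7, 8) of the 8×8 matrix W_I = (S ⊗ I_4) Υ_I are linearly dependent; in particular rank(W_I) < 8. -/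
open Matrix Kronecker

/-!
Each of the virtual positions `5`, `6`, `7` is attained by a single transmitter–receiver pair, and
the receiver is always the one at position `5`. So the last three columns of `(S ⊗ I₄) Υ` are the
columns of `S ⊗ I₄` belonging to that receiver. They are the images of the columns of `S` under one
linear map, hence dependent once `S` has rank less than `3`, as it does when it has two rows.
-/

theorem linearIndependent_col_of_kronecker {R l m n p : Type*} [CommSemiring R]
    {A : Matrix l m R} {B : Matrix n p R} (j : p)
    (h : LinearIndependent R fun k => (A ⊗ₖ B).col (k, j)) : LinearIndependent R A.col := by
  let tensorCol : (l → R) →ₗ[R] (l × n → R) :=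
    LinearMap.pi fun q => B q.2 j • LinearMap.proj q.1
  have tensorCol_comp_col : tensorCol ∘ A.col = fun k => (A ⊗ₖ B).col (k, j) := by
    ext k q
    exact mul_comm (B q.2 j) (A q.1 k)
  exact LinearIndependent.of_comp tensorCol (tensorCol_comp_col ▸ h)

theorem col_mul_of_col_eq_single {R l m n : Type*} [NonAssocSemiring R] [Fintype m]
    [DecidableEq m] (A : Matrix l m R) {B : Matrix m n R} {j : n} {k : m}
    (hB : B.col j = Pi.single k 1) : (A * B).col j = A.col k :=
  (congrArg (A *ᵥ ·) hB).trans (mulVec_single_one A k)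

theorem rank_lt_card_iff_not_linearIndependent_col {R m n : Type*} [CommRing R] [Nontrivial R]
    [Fintype n] (A : Matrix m n R) :
    A.rank < Fintype.card n ↔ ¬ LinearIndependent R A.col := by
  rw [linearIndependent_iff_card_le_finrank_span, not_le, rank_eq_finrank_span_cols, Set.finrank]

theorem dtx_add_drxI_eq_natAdd_iff (p : Fin 3 × Fin 4) (k : Fin 3) :
    dtx p.1 + drxI p.2 = (Fin.natAdd 5 k : Fin 8) ↔ p = (k, 3) := by
  decide +revert

theorem UpsilonI_col_natAdd (k : Fin 3) :
    UpsilonI.col (Fin.natAdd 5 k) = Pi.single (k, 3) 1 := by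
  ext p
  simp only [col_apply, UpsilonI, dtx_add_drxI_eq_natAdd_iff, Pi.single_apply]

section

variable {ι κ : Type*} {S : Matrix ι (Fin 3) ℂ}

theorem not_linearIndependent_col_natAdd_kronecker_mul_UpsilonI (hS : S.rank < 3)
    (B : Matrix κ (Fin 4) ℂ) :
    ¬ LinearIndependent ℂ fun k : Fin 3 => ((S ⊗ₖ B) * UpsilonI).col (Fin.natAdd 5 k) := by
  simp only [col_mul_of_col_eq_single _ (UpsilonI_col_natAdd _)]
  exact mt (linearIndependent_col_of_kronecker 3)
    ((rank_lt_card_iff_not_linearIndependent_col S).mp hS)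

theorem stmt7_general (hS : S.rank < 3) (B : Matrix κ (Fin 4) ℂ) :
    ¬ LinearIndependent ℂ
        ![((S ⊗ₖ B) * UpsilonI)ᵀ 5, ((S ⊗ₖ B) * UpsilonI)ᵀ 6, ((S ⊗ₖ B) * UpsilonI)ᵀ 7] ∧
    ((S ⊗ₖ B) * UpsilonI).rank < 8 := by
  have last_cols_dependent := not_linearIndependent_col_natAdd_kronecker_mul_UpsilonI hS B
  constructor
  · convert last_cols_dependent using 2
    ext k : 1
    fin_cases k <;> rfl
  · refine (rank_lt_card_iff_not_linearIndependent_col _).mpr fun cols_independent => ?_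
    exact last_cols_dependent (cols_independent.comp _ (Fin.natAdd_injective 3 5))

end

theorem stmt7 (S : Matrix (Fin 2) (Fin 3) ℂ) :
    ¬ LinearIndependent ℂ
        ![((S ⊗ₖ (1 : Matrix (Fin 4) (Fin 4) ℂ)) * UpsilonI)ᵀ 5,
          ((S ⊗ₖ (1 : Matrix (Fin 4) (Fin 4) ℂ)) * UpsilonI)ᵀ 6,
          ((S ⊗ₖ (1 : Matrix (Fin 4) (Fin 4) ℂ)) * UpsilonI)ᵀ 7] ∧
    ((S ⊗ₖ (1 : Matrix (Fin 4) (Fin 4) ℂ)) * UpsilonI).rank < 8 :=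
  stmt7_general (S.rank_le_height.trans_lt (by norm_num)) 1
end

section
/- Let Υ_I be the 12×8 0/1 matrix defined by Υ_I[(n−1)·4+m, ℓ] = 1 if d_tx[n] + d_rx[m] = ℓ−1 and 0 otherwise, where (d_tx[1],d_tx[2],d_tx[3]) = (0,1,2) and (d_rx[1],d_rx[2],d_rx[3],d_rx[4]) = (0,1,2,5). Then for every S ∈ ℂ^{2×3}, every A ∈ ℂ^{8×V}, and every set of 8 column indices, the corresponding 8 columns of B_I = (S ⊗ I_4) Υ_I A are linearly dependent; in particular the Kruskal rank of B_I is strictly less than 8 whenever V ≥ 8. -/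
/-!
Receiver `3` sits at position `5`, out of reach of the others: sum positions `5, 6, 7` come only
from its pairs `(n, 3)`. Hence columns `5, 6, 7` of `(S ⊗ₖ B) * UpsilonI` are the columns of `S`,
each tensored with column `3` of `B`, and the matrix can have full column rank `8` only if the
three columns of `S` are linearly independent.
-/

open Matrix Kronecker

section LinearIndependentColumns

variable {R ι J L M N κ : Type*}

theorem linearIndependent_col_iff_card_le_rank [CommRing R] [Nontrivial R] [Fintype N]
    (S : Matrix ι N R) :
    LinearIndependent R S.col ↔ Fintype.card N ≤ S.rank := by
  rw [linearIndependent_iff_card_le_finrank_span, rank_eq_finrank_span_cols, Set.finrank]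

theorem linearIndependent_col_of_mul [CommRing R] [Nontrivial R] [Fintype L] [Fintype κ]
    {C : Matrix ι L R} {A : Matrix L κ R} (hcard : Fintype.card L ≤ Fintype.card κ)
    (h : LinearIndependent R (C * A).col) : LinearIndependent R C.col := by
  rw [linearIndependent_col_iff_card_le_rank] at h ⊢
  exact hcard.trans (h.trans (rank_mul_le_left C A))

theorem linearIndependent_col_of_kronecker_s9 [CommSemiring R] {S : Matrix ι N R}
    {B : Matrix J M R} (m : M)
    (h : LinearIndependent R fun n => (S ⊗ₖ B).col (n, m)) : LinearIndependent R S.col :=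
  let tensorCol : (ι → R) →ₗ[R] (ι × J → R) :=
    LinearMap.pi fun p => B p.2 m • LinearMap.proj p.1
  have tensorCol_comp_col : tensorCol ∘ S.col = fun n => (S ⊗ₖ B).col (n, m) := by
    ext n p
    exact mul_comm (B p.2 m) (S p.1 n)
  .of_comp tensorCol (tensorCol_comp_col ▸ h)

theorem linearIndependent_col_of_kronecker_mul [CommSemiring R] [Fintype N] [Fintype M]
    [DecidableEq N] [DecidableEq M] {S : Matrix ι N R} {B : Matrix J M R} {Υ : Matrix (N × M) L R}
    (c : N ↪ L) (m : M) (hc : ∀ n, Υ.col (c n) = Pi.single (n, m) 1)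
    (h : LinearIndependent R ((S ⊗ₖ B) * Υ).col) : LinearIndependent R S.col := by
  have col_eq (n : N) : ((S ⊗ₖ B) * Υ).col (c n) = (S ⊗ₖ B).col (n, m) :=
    calc ((S ⊗ₖ B) * Υ).col (c n)
      _ = (S ⊗ₖ B) *ᵥ Υ.col (c n) := rfl
      _ = (S ⊗ₖ B).col (n, m) := by rw [hc, mulVec_single_one]
  have h_comp : LinearIndependent R fun n => ((S ⊗ₖ B) * Υ).col (c n) := h.comp c c.injective
  simp only [col_eq] at h_comp
  exact linearIndependent_col_of_kronecker_s9 m h_comp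

end LinearIndependentColumns

theorem dtx_add_drxI_eq_natAdd_five_iff :
    ∀ (n : Fin 3) (p : Fin 3 × Fin 4),
      dtx p.1 + drxI p.2 = (Fin.natAdd 5 n : ℕ) ↔ p = (n, 3) := by
  decide

theorem UpsilonI_col_natAdd_five (n : Fin 3) :
    UpsilonI.col (Fin.natAdd 5 n) = Pi.single (n, 3) 1 := by
  ext p
  simp only [col_apply, UpsilonI, dtx_add_drxI_eq_natAdd_five_iff, Pi.single_apply]

theorem stmt9_general {ι J κ : Type*} (S : Matrix ι (Fin 3) ℂ) (hS : S.rank ≤ 2)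
    (B : Matrix J (Fin 4) ℂ) (A : Matrix (Fin 8) κ ℂ) (s : Finset κ) (hs : 8 ≤ s.card) :
    ¬ LinearIndependent ℂ (fun i : s => ((S ⊗ₖ B) * UpsilonI * A)ᵀ (i : κ)) := by
  intro h
  have h_submatrix : LinearIndependent ℂ
      ((S ⊗ₖ B) * UpsilonI * A.submatrix id ((↑) : s → κ)).col := h
  have h_sensing : LinearIndependent ℂ ((S ⊗ₖ B) * UpsilonI).col :=
    linearIndependent_col_of_mul (by simpa using hs) h_submatrix
  have h_waveform : LinearIndependent ℂ S.col :=
    linearIndependent_col_of_kronecker_mul (Fin.natAddEmb 5) 3 UpsilonI_col_natAdd_five h_sensing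
  have h_rank : 3 ≤ S.rank := by
    simpa using (linearIndependent_col_iff_card_le_rank S).mp h_waveform
  omega

theorem stmt9 (S : Matrix (Fin 2) (Fin 3) ℂ) (V : ℕ) (A : Matrix (Fin 8) (Fin V) ℂ)
    (s : Finset (Fin V)) (hs : s.card = 8) :
    ¬ LinearIndependent ℂ
        (fun i : s => ((S ⊗ₖ (1 : Matrix (Fin 4) (Fin 4) ℂ)) * UpsilonI * A)ᵀ (i : Fin V)) :=
  stmt9_general S S.rank_le_height 1 A s hs.ge
end

section
/- Let Υ_II be the 12×8 0/1 matrix defined by Υ_II[(n−1)·4+m, ℓ] = 1 if d_tx[n] + d_rx[m] = ℓ−1 and 0 otherwise, where (d_tx[1],d_tx[2],d_tx[3]) = (0,1,2) and (d_rx[1],d_rx[2],d_rx[3],d_rx[4]) = (0,1,3,5), and let S₀ ∈ ℂ^{2×3} have rows (1,0,1) and (0,1,0). Let z_1, …, z_V be pairwise distinct complex numbers with V ≥ 8 and let A ∈ ℂ^{8×V} have entries A[ℓ,i] = z_i^(ℓ−1). Then every set of 8 columns of B_II = (S₀ ⊗ I_4) Υ_II A is linearly independent; i.e., the Kruskal rank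 of B_II equals 8. -/
open Matrix Kronecker

/-- The rank-2 waveform matrix with rows (1,0,1) and (0,1,0). -/
noncomputable def S₀ : Matrix (Fin 2) (Fin 3) ℂ := !![1, 0, 1; 0, 1, 0]

/-!
For a vector `x` on the virtual sensors, `UpsilonII` copies `x ℓ` to every pair `(n, m)` with
`dtx n + drxII m = ℓ`, and `S₀` adds the copies for `n = 0` and `n = 2` and keeps the one for
`n = 1`. If the result vanishes, the middle transmitter gives `x 1 = x 2 = x 4 = x 6 = 0`, and the
sums `x 0 + x 2`, `x 1 + x 3`, `x 3 + x 5`, `x 5 + x 7` then kill the remaining entries in turn.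
So the filtered redundancy pattern is injective and preserves the linear independence of the
Vandermonde columns.
-/

theorem linearIndependent_pow_of_card_le {R ι : Type*} [CommRing R] [IsDomain R] [Finite ι]
    {z : ι → R} (hz : Function.Injective z) {n : ℕ} (hn : Nat.card ι ≤ n) :
    LinearIndependent R (fun i (ℓ : Fin n) => z i ^ (ℓ : ℕ)) := by
  have square : LinearIndependent R (fun i (ℓ : Fin (Nat.card ι)) => z i ^ (ℓ : ℕ)) := by
    let e := Finite.equivFin ι
    rw [← linearIndependent_equiv e.symm]
    exact linearIndependent_rows_of_det_ne_zero
      (det_vandermonde_ne_zero_iff.mpr (hz.comp e.symm.injective))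
  exact LinearIndependent.of_comp (LinearMap.funLeft R R (Fin.castLE hn)) square

theorem linearIndependent_col_mul {R l m n : Type*} [CommRing R] [Fintype m]
    {M : Matrix l m R} (hM : Function.Injective M.mulVec)
    {A : Matrix m n R} (hA : LinearIndependent R A.col) :
    LinearIndependent R (M * A).col :=
  hA.map' M.mulVecLin (LinearMap.ker_eq_bot.mpr hM)

theorem kronecker_one_mulVec_apply_s10 {R l m n : Type*} [NonAssocSemiring R] [Fintype m] [Fintype n]
    [DecidableEq n] (S : Matrix l m R) (v : m × n → R) (a : l) (k : n) :
    ((S ⊗ₖ (1 : Matrix n n R)) *ᵥ v) (a, k) = (S *ᵥ fun j => v (j, k)) a := by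
  simp [mulVec, dotProduct, Fintype.sum_prod_type, one_apply]

/-- The virtual sensor of the sum co-array produced by transmitter `n` and receiver `m`, indexed
from `0` so that the index is also its position. -/
def virtualSensor (n : Fin 3) (m : Fin 4) : Fin 8 :=
  ⟨dtx n + drxII m, by decide +revert⟩

theorem UpsilonII_mulVec_apply (x : Fin 8 → ℂ) (n : Fin 3) (m : Fin 4) :
    (UpsilonII *ᵥ x) (n, m) = x (virtualSensor n m) := by
  have row (ℓ : Fin 8) : UpsilonII (n, m) ℓ = if virtualSensor n m = ℓ then 1 else 0 := by
    simp only [UpsilonII, virtualSensor, Fin.ext_iff]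
  simp [mulVec, dotProduct, row]

theorem S₀_mulVec (w : Fin 3 → ℂ) : S₀ *ᵥ w = ![w 0 + w 2, w 1] := by
  ext a
  fin_cases a <;> simp [S₀, mulVec, dotProduct, Fin.sum_univ_three]

theorem S₀_kronecker_one_mul_UpsilonII_mulVec_apply (x : Fin 8 → ℂ) (a : Fin 2) (m : Fin 4) :
    (((S₀ ⊗ₖ (1 : Matrix (Fin 4) (Fin 4) ℂ)) * UpsilonII) *ᵥ x) (a, m) =
      ![x (virtualSensor 0 m) + x (virtualSensor 2 m), x (virtualSensor 1 m)] a := by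
  rw [← mulVec_mulVec, kronecker_one_mulVec_apply_s10, S₀_mulVec]
  simp only [UpsilonII_mulVec_apply]

theorem S₀_kronecker_one_mul_UpsilonII_mulVec_injective :
    Function.Injective ((S₀ ⊗ₖ (1 : Matrix (Fin 4) (Fin 4) ℂ)) * UpsilonII).mulVec := by
  rw [← coe_mulVecLin, ← LinearMap.ker_eq_bot, LinearMap.ker_eq_bot']
  intro x hx
  have entry (a : Fin 2) (m : Fin 4) :
      ![x (virtualSensor 0 m) + x (virtualSensor 2 m), x (virtualSensor 1 m)] a = 0 := by
    rw [← S₀_kronecker_one_mul_UpsilonII_mulVec_apply]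
    exact congrFun hx (a, m)
  have outer (m : Fin 4) : x (virtualSensor 0 m) + x (virtualSensor 2 m) = 0 := entry 0 m
  have middle (m : Fin 4) : x (virtualSensor 1 m) = 0 := entry 1 m
  have h1 : x 1 = 0 := middle 0
  have h2 : x 2 = 0 := middle 1
  have h4 : x 4 = 0 := middle 2
  have h6 : x 6 = 0 := middle 3
  have h02 : x 0 + x 2 = 0 := outer 0
  have h13 : x 1 + x 3 = 0 := outer 1
  have h35 : x 3 + x 5 = 0 := outer 2
  have h57 : x 5 + x 7 = 0 := outer 3
  have h0 : x 0 = 0 := by simpa only [h2, add_zero] using h02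
  have h3 : x 3 = 0 := by simpa only [h1, zero_add] using h13
  have h5 : x 5 = 0 := by simpa only [h3, zero_add] using h35
  have h7 : x 7 = 0 := by simpa only [h5, zero_add] using h57
  ext ℓ
  fin_cases ℓ <;> assumption

theorem stmt10_general {ι : Type*} {z : ι → ℂ} {s : Finset ι} (hs : s.card ≤ 8)
    (hz : Set.InjOn z s) {A : Matrix (Fin 8) ι ℂ}
    (hA : ∀ (ℓ : Fin 8) (i : ι), A ℓ i = z i ^ (ℓ : ℕ)) :
    LinearIndependent ℂ
      (fun i : s => ((S₀ ⊗ₖ (1 : Matrix (Fin 4) (Fin 4) ℂ)) * UpsilonII * A)ᵀ (i : ι)) := by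
  have vandermonde_cols : LinearIndependent ℂ (A.submatrix id ((↑) : s → ι)).col := by
    have hcols : (A.submatrix id ((↑) : s → ι)).col =
        fun (i : s) (ℓ : Fin 8) => z i ^ (ℓ : ℕ) := by
      ext i ℓ
      exact hA ℓ i
    rw [hcols]
    exact linearIndependent_pow_of_card_le hz.injective (by simpa using hs)
  exact linearIndependent_col_mul S₀_kronecker_one_mul_UpsilonII_mulVec_injective vandermonde_cols

theorem stmt10 (V : ℕ) (hV : 8 ≤ V)
    (z : Fin V → ℂ) (hz : Function.Injective z)
    (A : Matrix (Fin 8) (Fin V) ℂ)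
    (hA : ∀ (ℓ : Fin 8) (i : Fin V), A ℓ i = z i ^ (ℓ : ℕ)) :
    ∀ s : Finset (Fin V), s.card = 8 →
      LinearIndependent ℂ
        (fun i : s => ((S₀ ⊗ₖ (1 : Matrix (Fin 4) (Fin 4) ℂ)) * UpsilonII * A)ᵀ (i : Fin V)) :=
  fun _ hs => stmt10_general hs.le hz.injOn hA
end
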